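/- Let L be a ℤ-graded Lie conformal algebra of class 𝒱 with deg p_{−1,1}(∂) = 1 and deg p_{0,1}(λ) = 1. Then L is isomorphic, as a Lie conformal algebra, to CL₂(0,s) or to CL₃(s) for some s ∈ ℂ. -/

import Mathlib

open scoped BigOperators Classical ENNReal
open Polynomial

noncomputable section

/-- A Lie conformal algebra over `ℂ`, encoded via its `n`-th products
`a_(n) b` and the operator `∂ = D`.  The `λ`-bracket is
`[a_λ b] = ∑ₙ (λⁿ/n!) • (a_(n) b)`. -/
structure LieConformalAlgebra (L : Type) [AddCommGroup L] [Module ℂ L] : Type where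
  D : L →ₗ[ℂ] L
  prd : ℕ → L →ₗ[ℂ] L →ₗ[ℂ] L
  bound : ∀ a b : L, ∃ N : ℕ, ∀ n : ℕ, N ≤ n → prd n a b = 0
  sesq : ∀ (n : ℕ) (a b : L), prd n (D a) b = (-(n : ℂ)) • prd (n - 1) a b
  sesq' : ∀ (n : ℕ) (a b : L),
    prd n a (D b) = D (prd n a b) + (n : ℂ) • prd (n - 1) a b
  skew : ∀ (n : ℕ) (a b : L),
    prd n a b
      = - ∑ᶠ j : ℕ, ((-1 : ℂ) ^ (n + j) * ((Nat.factorial j : ℂ))⁻¹) • (⇑D)^[j] (prd (n + j) b a)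
  jacobi : ∀ (m n : ℕ) (a b c : L),
    prd m a (prd n b c) - prd n b (prd m a c)
      = ∑ j ∈ Finset.range (m + 1), (Nat.choose m j : ℂ) • prd (m + n - j) (prd j a b) c

namespace LieConformalAlgebra

variable {L : Type} [AddCommGroup L] [Module ℂ L]

/-- The action of a polynomial `q(∂) ∈ ℂ[∂]` on an element. -/
def applyP (C : LieConformalAlgebra L) (q : Polynomial ℂ) (x : L) : L :=
  q.sum fun k c => c • (⇑C.D)^[k] x

/-- `[a_λ b] = p(∂, λ) • t`, where `p ∈ ℂ[∂][λ]` is a two-variable polynomial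
(outer variable `λ`, inner variable `∂`). -/
def BracketEq (C : LieConformalAlgebra L) (a b t : L) (p : Polynomial (Polynomial ℂ)) : Prop :=
  ∀ n : ℕ, C.prd n a b = (Nat.factorial n : ℂ) • C.applyP (p.coeff n) t

def IsSubalgebra (C : LieConformalAlgebra L) (N : Submodule ℂ L) : Prop :=
  (∀ x ∈ N, C.D x ∈ N) ∧ ∀ n : ℕ, ∀ a ∈ N, ∀ b ∈ N, C.prd n a b ∈ N

def IsIdeal (C : LieConformalAlgebra L) (N : Submodule ℂ L) : Prop :=
  (∀ x ∈ N, C.D x ∈ N) ∧ ∀ (n : ℕ) (a : L), ∀ b ∈ N, C.prd n a b ∈ N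

/-- `L` is finitely generated as a Lie conformal algebra (finite type). -/
def FiniteType (C : LieConformalAlgebra L) : Prop :=
  ∃ s : Finset L, ∀ N : Submodule ℂ L, C.IsSubalgebra N → (s : Set L) ⊆ (N : Set L) → N = ⊤

/-- `L` is finitely generated as a `ℂ[∂]`-module. -/
def FGPolyModule (C : LieConformalAlgebra L) : Prop :=
  ∃ s : Finset L, ∀ N : Submodule ℂ L, (∀ x ∈ N, C.D x ∈ N) → (s : Set L) ⊆ (N : Set L) → N = ⊤

/-- Iterated adjoint action `a₁_(k₁)(a₂_(k₂)(⋯ x))`. -/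
def iterPrd (C : LieConformalAlgebra L) : List (L × ℕ) → L → L
  | [], x => x
  | (a, k) :: t, x => C.prd k a (iterPrd C t x)

/-- The `ℂ[∂]`-rank of the submodule `N` is at most `r`:
any `r+1` elements of `N` are `ℂ[∂]`-linearly dependent. -/
def polyRankLE (C : LieConformalAlgebra L) (N : Submodule ℂ L) (r : ℕ) : Prop :=
  ∀ v : Fin (r + 1) → L, (∀ k, v k ∈ N) →
    ∃ q : Fin (r + 1) → Polynomial ℂ, (∃ k, q k ≠ 0) ∧ ∑ k, C.applyP (q k) (v k) = 0

/-- The family `v` is a free `ℂ[∂]`-basis of `L`. -/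
def IsFreePolyBasis (C : LieConformalAlgebra L) {ι : Type} (v : ι → L) : Prop :=
  LinearIndependent ℂ (fun q : ι × ℕ => (⇑C.D)^[q.2] (v q.1)) ∧
  Submodule.span ℂ (Set.range fun q : ι × ℕ => (⇑C.D)^[q.2] (v q.1)) = ⊤

/-- `[U_λ V]`: the `ℂ`-span of all `u_(n) v`. -/
def bspan (C : LieConformalAlgebra L) (U V : Set L) : Submodule ℂ L :=
  Submodule.span ℂ {x : L | ∃ (n : ℕ) (u : L) (w : L), u ∈ U ∧ w ∈ V ∧ x = C.prd n u w}

end LieConformalAlgebra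

/-- `∂` as an element of `ℂ[∂][λ]`. -/
def Pd : Polynomial (Polynomial ℂ) := Polynomial.C Polynomial.X
/-- `λ` as an element of `ℂ[∂][λ]`. -/
def Pl : Polynomial (Polynomial ℂ) := Polynomial.X
/-- a constant in `ℂ[∂][λ]`. -/
def Pc (a : ℂ) : Polynomial (Polynomial ℂ) := Polynomial.C (Polynomial.C a)

/-- Total degree of a two-variable polynomial in `ℂ[∂][λ]`. -/
def tdeg (p : Polynomial (Polynomial ℂ)) : ℕ :=
  p.support.sup fun n => n + (p.coeff n).natDegree

section ModelPolynomials

/-- structure polynomials of `𝒱(s)` -/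
def pV (s : ℂ) (i j : ℤ) : Polynomial (Polynomial ℂ) :=
  Pd + Pc 2 * Pl + Pc (s * ((i : ℂ) - (j : ℂ)))

/-- structure polynomials of `CL₁(s)` -/
def pCL1 (s : ℂ) (i j : ℤ) : Polynomial (Polynomial ℂ) :=
  Pc ((i : ℂ) + 1) * Pd + Pc ((i : ℂ) + (j : ℂ) + 2) * Pl + Pc (s * ((i : ℂ) - (j : ℂ)))

/-- structure polynomials of `CL₂(b,s)` -/
def pCL2 (b s : ℂ) (i j : ℤ) : Polynomial (Polynomial ℂ) :=
  Pc ((i : ℂ) + b) * Pd + Pc ((i : ℂ) + (j : ℂ) + 2 * b) * Pl + Pc (s * ((i : ℂ) - (j : ℂ)))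

/-- structure polynomials of `SCL₂(b,s)` (for `2b ∈ ℤ`), w.r.t. the basis
`L'ᵢ = Lᵢ (i ≠ -2b)`, `L'_{-2b} = (∂+2s)L_{-2b}` of the corresponding graded
subalgebra of `CL₂(b,s)`. -/
def pSCL2 (b s : ℂ) (i j : ℤ) : Polynomial (Polynomial ℂ) :=
  (if (i : ℂ) = -(2 * b) then Pc (2 * s) - Pl else 1) *
  (if (j : ℂ) = -(2 * b) then Pd + Pl + Pc (2 * s) else 1) *
  (if (i : ℂ) + (j : ℂ) = -(2 * b) then Pc ((i : ℂ) + b) else pCL2 b s i j)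

/-- structure polynomials of `CL₃(s)` -/
def pCL3 (s : ℂ) (i j : ℤ) : Polynomial (Polynomial ℂ) :=
  if i + j = 0 then Pc (i : ℂ) * (Pd + Pc s)
  else if i = 0 then Pc (-(j : ℂ)) * (Pc (2 * s) - Pl)
  else if j = 0 then Pc (i : ℂ) * (Pd + Pl + Pc (2 * s))
  else Pc (i : ℂ) * Pd + Pc ((i : ℂ) + (j : ℂ)) * Pl + Pc (s * ((i : ℂ) - (j : ℂ)))

/-- structure polynomials of `ECL(s)` -/
def pECL (s : ℂ) (i j : ℤ) : Polynomial (Polynomial ℂ) :=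
  if i + j = 0 then Pc (i : ℂ) * (Pd + Pc s) * (Pd + Pc (2 * s))
  else if i = 0 then Pc (-(j : ℂ))
  else if j = 0 then Pc (i : ℂ)
  else Pc (i : ℂ) * Pd + Pc ((i : ℂ) + (j : ℂ)) * Pl + Pc (s * ((i : ℂ) - (j : ℂ)))

/-- structure polynomials of `M(1)` (indices `≥ -1`, completed by skew-symmetry) -/
def pM1 (i j : ℤ) : Polynomial (Polynomial ℂ) :=
  if i = 1 ∧ j = 1 then Pd + Pc 2 * Pl
  else if i = -1 ∧ 1 ≤ j then Pc (((j : ℂ) + 1) * ((j : ℂ) - 2) / 2)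
  else if j = -1 ∧ 1 ≤ i then Pc (-(((i : ℂ) + 1) * ((i : ℂ) - 2) / 2))
  else if i = 0 then Pc (-(j : ℂ))
  else if j = 0 then Pc (i : ℂ)
  else if i = 1 ∧ 2 ≤ j then 1
  else if j = 1 ∧ 2 ≤ i then -1
  else 0

/-- structure polynomials of `M(2)` (completed by skew-symmetry) -/
def pM2 (i j : ℤ) : Polynomial (Polynomial ℂ) :=
  if i = 1 ∧ j = 1 then Pd + Pc 2 * Pl
  else if i = -1 ∧ j = -1 then Pd + Pc 2 * Pl
  else if i = 0 then Pc (-(j : ℂ))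
  else if j = 0 then Pc (i : ℂ)
  else if i = -1 ∧ 1 ≤ j then Pc (((j : ℂ) + 1) * ((j : ℂ) - 2) / 2)
  else if j = -1 ∧ 1 ≤ i then Pc (-(((i : ℂ) + 1) * ((i : ℂ) - 2) / 2))
  else if i = 1 ∧ j ≤ -2 then Pc (((j : ℂ) - 1) * ((j : ℂ) + 2) / 2)
  else if j = 1 ∧ i ≤ -2 then Pc (-(((i : ℂ) - 1) * ((i : ℂ) + 2) / 2))
  else if i = -1 ∧ j ≤ -2 then 1
  else if j = -1 ∧ i ≤ -2 then -1
  else if i = 1 ∧ 2 ≤ j then 1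
  else if j = 1 ∧ 2 ≤ i then -1
  else 0

end ModelPolynomials

namespace LieConformalAlgebra

variable {L : Type} [AddCommGroup L] [Module ℂ L]

/-- `C` is isomorphic to the Virasoro Lie conformal algebra. -/
def IsVir (C : LieConformalAlgebra L) : Prop :=
  ∃ e : L, C.IsFreePolyBasis (fun _ : Unit => e) ∧ C.BracketEq e e e (Pd + Pc 2 * Pl)

/-- `C` is isomorphic to the loop Virasoro Lie conformal algebra `𝒱(s)`. -/
def IsV (C : LieConformalAlgebra L) (s : ℂ) : Prop :=
  ∃ v : ℤ → L, C.IsFreePolyBasis v ∧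
    ∀ i j : ℤ, C.BracketEq (v i) (v j) (v (i + j)) (pV s i j)

/-- `C` is isomorphic to `CL₁(s)`. -/
def IsCL1 (C : LieConformalAlgebra L) (s : ℂ) : Prop :=
  ∃ v : ℤ → L, C.IsFreePolyBasis (fun q : {i : ℤ // -1 ≤ i} => v q.1) ∧
    ∀ i j : ℤ, -1 ≤ i → -1 ≤ j →
      C.BracketEq (v i) (v j) (if -1 ≤ i + j then v (i + j) else 0) (pCL1 s i j)

/-- `C` is isomorphic to `CL₂(b,s)`. -/
def IsCL2 (C : LieConformalAlgebra L) (b s : ℂ) : Prop :=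
  ∃ v : ℤ → L, C.IsFreePolyBasis v ∧
    ∀ i j : ℤ, C.BracketEq (v i) (v j) (v (i + j)) (pCL2 b s i j)

/-- `C` is isomorphic to `SCL₂(b,s)`. -/
def IsSCL2 (C : LieConformalAlgebra L) (b s : ℂ) : Prop :=
  ∃ v : ℤ → L, C.IsFreePolyBasis v ∧
    ∀ i j : ℤ, C.BracketEq (v i) (v j) (v (i + j)) (pSCL2 b s i j)

/-- `C` is isomorphic to `CL₃(s)`. -/
def IsCL3 (C : LieConformalAlgebra L) (s : ℂ) : Prop :=
  ∃ v : ℤ → L, C.IsFreePolyBasis v ∧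
    ∀ i j : ℤ, C.BracketEq (v i) (v j) (v (i + j)) (pCL3 s i j)

/-- `C` is isomorphic to `ECL(s)`. -/
def IsECL (C : LieConformalAlgebra L) (s : ℂ) : Prop :=
  ∃ v : ℤ → L, C.IsFreePolyBasis v ∧
    ∀ i j : ℤ, C.BracketEq (v i) (v j) (v (i + j)) (pECL s i j)

/-- `C` is isomorphic to `M(1)`. -/
def IsM1 (C : LieConformalAlgebra L) : Prop :=
  ∃ v : ℤ → L, C.IsFreePolyBasis (fun q : {i : ℤ // -1 ≤ i} => v q.1) ∧
    ∀ i j : ℤ, -1 ≤ i → -1 ≤ j →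
      C.BracketEq (v i) (v j) (if -1 ≤ i + j then v (i + j) else 0) (pM1 i j)

/-- `C` is isomorphic to `M(2)`. -/
def IsM2 (C : LieConformalAlgebra L) : Prop :=
  ∃ v : ℤ → L, C.IsFreePolyBasis v ∧
    ∀ i j : ℤ, C.BracketEq (v i) (v j) (v (i + j)) (pM2 i j)

/-- `C` is isomorphic to the current Lie conformal algebra `Cur 𝔤`. -/
def IsCur (C : LieConformalAlgebra L) (g : Type) [LieRing g] [LieAlgebra ℂ g] : Prop :=
  ∃ φ : g →ₗ[ℂ] L,
    Function.Bijective (fun f : ℕ →₀ g => f.sum fun k x => (⇑C.D)^[k] (φ x)) ∧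
    (∀ x y : g, C.prd 0 (φ x) (φ y) = φ ⁅x, y⁆) ∧
    ∀ n : ℕ, 1 ≤ n → ∀ x y : g, C.prd n (φ x) (φ y) = 0

/-- `C ≅ Cur sl(2,ℂ)`. -/
def IsCurSl2 (C : LieConformalAlgebra L) : Prop :=
  C.IsCur ↥(LieAlgebra.SpecialLinear.sl (Fin 2) ℂ)

/-- `C ≅ Cur 𝒲`, `𝒲` the Witt algebra (basis `wᵢ`, `[wᵢ,wⱼ] = (j-i)w_{i+j}`). -/
def IsCurWitt (C : LieConformalAlgebra L) : Prop :=
  ∃ v : ℤ → L, C.IsFreePolyBasis v ∧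
    (∀ i j : ℤ, C.prd 0 (v i) (v j) = (((j : ℂ) - (i : ℂ))) • v (i + j)) ∧
    ∀ n : ℕ, 1 ≤ n → ∀ i j : ℤ, C.prd n (v i) (v j) = 0

/-- `C ≅ Cur 𝒲₁`, `𝒲₁` spanned by the `wᵢ`, `i ≥ -1`. -/
def IsCurWitt1 (C : LieConformalAlgebra L) : Prop :=
  ∃ v : ℤ → L, C.IsFreePolyBasis (fun q : {i : ℤ // -1 ≤ i} => v q.1) ∧
    (∀ i j : ℤ, -1 ≤ i → -1 ≤ j →
      C.prd 0 (v i) (v j) = (((j : ℂ) - (i : ℂ))) • (if -1 ≤ i + j then v (i + j) else 0)) ∧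
    ∀ n : ℕ, 1 ≤ n → ∀ i j : ℤ, -1 ≤ i → -1 ≤ j → C.prd n (v i) (v j) = 0

end LieConformalAlgebra

/-- A `ℤ`-graded Lie conformal algebra. -/
structure GradedLCA (L : Type) [AddCommGroup L] [Module ℂ L]
    extends LieConformalAlgebra L where
  G : ℤ → Submodule ℂ L
  internal : DirectSum.IsInternal G
  dGrade : ∀ i : ℤ, ∀ x ∈ G i, D x ∈ G i
  prdGrade : ∀ (i j : ℤ) (n : ℕ), ∀ a ∈ G i, ∀ b ∈ G j, prd n a b ∈ G (i + j)

namespace GradedLCA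

variable {L : Type} [AddCommGroup L] [Module ℂ L]

/-- A graded ideal: an ideal generated by homogeneous elements. -/
def IsGradedIdeal (C : GradedLCA L) (N : Submodule ℂ L) : Prop :=
  C.toLieConformalAlgebra.IsIdeal N ∧ (⨆ i : ℤ, N ⊓ C.G i) = N

/-- `L` is simple graded: nonzero bracket, and the only graded ideals are `⊥` and `⊤`. -/
def IsSimpleGraded (C : GradedLCA L) : Prop :=
  (∃ (n : ℕ) (a b : L), C.prd n a b ≠ 0) ∧
  ∀ N : Submodule ℂ L, C.IsGradedIdeal N → N = ⊥ ∨ N = ⊤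

/-- `[L_λ L] = L`. -/
def Perfect (C : GradedLCA L) : Prop :=
  Submodule.span ℂ {x : L | ∃ (n : ℕ) (a b : L), x = C.prd n a b} = ⊤

/-- Each component `L_i` is a nilpotent `L₀`-module under the adjoint action. -/
def Rootless (C : GradedLCA L) : Prop :=
  ∀ i : ℤ, ∃ n : ℕ, 1 ≤ n ∧ ∀ l : List (L × ℕ), l.length = n →
    (∀ q ∈ l, q.1 ∈ C.G 0) → ∀ x ∈ C.G i, C.toLieConformalAlgebra.iterPrd l x = 0

/-- The ranks of the components are uniformly bounded. -/
def UniformlyBounded (C : GradedLCA L) : Prop :=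
  ∃ N : ℕ, 1 ≤ N ∧ ∀ i : ℤ, C.toLieConformalAlgebra.polyRankLE (C.G i) N

end GradedLCA

/-- A module over a Lie conformal algebra, encoded via the `n`-th actions. -/
structure LCAModule {L : Type} [AddCommGroup L] [Module ℂ L] (C : LieConformalAlgebra L)
    (M : Type) [AddCommGroup M] [Module ℂ M] : Type where
  DM : M →ₗ[ℂ] M
  act : ℕ → L →ₗ[ℂ] M →ₗ[ℂ] M
  bound : ∀ (a : L) (m : M), ∃ N : ℕ, ∀ n : ℕ, N ≤ n → act n a m = 0
  sesq : ∀ (n : ℕ) (a : L) (m : M), act n (C.D a) m = (-(n : ℂ)) • act (n - 1) a m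
  sesq' : ∀ (n : ℕ) (a : L) (m : M),
    act n a (DM m) = DM (act n a m) + (n : ℂ) • act (n - 1) a m
  comm : ∀ (p q : ℕ) (a b : L) (m : M),
    act p a (act q b m) - act q b (act p a m)
      = ∑ j ∈ Finset.range (p + 1), (Nat.choose p j : ℂ) • act (p + q - j) (C.prd j a b) m

namespace LCAModule

variable {L : Type} [AddCommGroup L] [Module ℂ L] {C : LieConformalAlgebra L}
variable {M : Type} [AddCommGroup M] [Module ℂ M]

/-- Iterated action `a₁_(k₁)(a₂_(k₂)(⋯ m))`. -/
def iterAct (ρ : LCAModule C M) : List (L × ℕ) → M → M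
  | [], m => m
  | (a, k) :: t, m => ρ.act k a (iterAct ρ t m)

/-- `N` is an `L`-submodule of `M`. -/
def IsSub (ρ : LCAModule C M) (N : Submodule ℂ M) : Prop :=
  (∀ m ∈ N, ρ.DM m ∈ N) ∧ ∀ (n : ℕ) (a : L), ∀ m ∈ N, ρ.act n a m ∈ N

/-- `M` is a nilpotent module. -/
def Nilpotent (ρ : LCAModule C M) : Prop :=
  ∃ n : ℕ, 1 ≤ n ∧ ∀ l : List (L × ℕ), l.length = n → ∀ m : M, ρ.iterAct l m = 0

/-- `M` is finitely generated as an `L`-module. -/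
def FG (ρ : LCAModule C M) : Prop :=
  ∃ s : Finset M, ∀ N : Submodule ℂ M, ρ.IsSub N → (s : Set M) ⊆ (N : Set M) → N = ⊤

/-- The `L`-submodule `N` is finitely generated as an `L`-module. -/
def FGIn (ρ : LCAModule C M) (N : Submodule ℂ M) : Prop :=
  ∃ s : Finset M, (s : Set M) ⊆ (N : Set M) ∧
    ∀ P : Submodule ℂ M, ρ.IsSub P → (s : Set M) ⊆ (P : Set M) → N ≤ P

/-- `M` is finitely generated as a `ℂ[∂]`-module. -/
def FGPoly (ρ : LCAModule C M) : Prop :=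
  ∃ s : Finset M, ∀ N : Submodule ℂ M, (∀ m ∈ N, ρ.DM m ∈ N) → (s : Set M) ⊆ (N : Set M) → N = ⊤

end LCAModule

/-- A family is `ℂ[∂]`-linearly independent. -/
def polyIndep {M : Type} [AddCommGroup M] [Module ℂ M] (DM : M →ₗ[ℂ] M)
    {r : ℕ} (v : Fin r → M) : Prop :=
  ∀ q : Fin r → Polynomial ℂ,
    (∑ k, (q k).sum fun t c => c • (⇑DM)^[t] (v k)) = 0 → ∀ k, q k = 0

/-- The `ℂ[∂]`-rank of a submodule, in `ℕ∞`. -/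
def polyRank {M : Type} [AddCommGroup M] [Module ℂ M] (DM : M →ₗ[ℂ] M)
    (N : Submodule ℂ M) : ℕ∞ :=
  ⨆ r ∈ {r : ℕ | ∃ v : Fin r → M, (∀ k, v k ∈ N) ∧ polyIndep DM v}, (r : ℕ∞)

/-- A graded module over a `ℤ`-graded Lie conformal algebra. -/
structure GradedLCAModule {L : Type} [AddCommGroup L] [Module ℂ L] (C : GradedLCA L)
    (M : Type) [AddCommGroup M] [Module ℂ M]
    extends LCAModule C.toLieConformalAlgebra M where
  GM : ℤ → Submodule ℂ M
  internal : DirectSum.IsInternal GM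
  dGrade : ∀ i : ℤ, ∀ m ∈ GM i, DM m ∈ GM i
  actGrade : ∀ (i j : ℤ) (n : ℕ), ∀ a ∈ C.G i, ∀ m ∈ GM j, act n a m ∈ GM (i + j)

namespace GradedLCAModule

variable {L : Type} [AddCommGroup L] [Module ℂ L] {C : GradedLCA L}
variable {M : Type} [AddCommGroup M] [Module ℂ M]

/-- `Mⁿ = ⊕_{|i| ≤ n} M_i`. -/
def seg (ρ : GradedLCAModule C M) (n : ℕ) : Submodule ℂ M :=
  ⨆ i : ℤ, ⨆ _ : |i| ≤ (n : ℤ), ρ.GM i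

/-- `e(M) = liminf (1/n) rank_{ℂ[∂]} Mⁿ`. -/
def eM (ρ : GradedLCAModule C M) : ℝ≥0∞ :=
  Filter.atTop.liminf fun n : ℕ => (polyRank ρ.DM (ρ.seg n) : ℝ≥0∞) / (n : ℝ≥0∞)

/-- Each `M_i` is a nilpotent `L₀`-module. -/
def Weightless (ρ : GradedLCAModule C M) : Prop :=
  ∀ i : ℤ, ∃ n : ℕ, 1 ≤ n ∧ ∀ l : List (L × ℕ), l.length = n →
    (∀ q ∈ l, q.1 ∈ C.G 0) → ∀ m ∈ ρ.GM i, ρ.toLCAModule.iterAct l m = 0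

/-- The submodule `I(M)` generated by all homogeneous `v` lying in the span of
the iterated actions of `L` on `v`. -/
def IM (ρ : GradedLCAModule C M) : Submodule ℂ M :=
  sInf {N : Submodule ℂ M | ρ.toLCAModule.IsSub N ∧
    {v : M | (∃ i : ℤ, v ∈ ρ.GM i) ∧
      v ∈ Submodule.span ℂ
        {w : M | ∃ l : List (L × ℕ), 1 ≤ l.length ∧ w = ρ.toLCAModule.iterAct l v}} ⊆ N}

end GradedLCAModule

/-- The structure context for graded Lie conformal algebras all of whose
nonzero components are free of rank one over `ℂ[∂]`: fixed homogeneous bases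
`bas i` and structure polynomials `sp i j ∈ ℂ[∂][λ]`, with `0 ∈ Supp(L)` and
`L₀` abelian. -/
structure RankOneContext (L : Type) [AddCommGroup L] [Module ℂ L]
    extends GradedLCA L where
  bas : ℤ → L
  sp : ℤ → ℤ → Polynomial (Polynomial ℂ)
  bas_mem : ∀ i : ℤ, bas i ∈ G i
  bas_zero : ∀ i : ℤ, G i = ⊥ → bas i = 0
  bas_indep : ∀ i : ℤ, G i ≠ ⊥ → LinearIndependent ℂ fun k : ℕ => (⇑D)^[k] (bas i)
  bas_span : ∀ i : ℤ, G i ≠ ⊥ →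
    G i = Submodule.span ℂ (Set.range fun k : ℕ => (⇑D)^[k] (bas i))
  sp_brkt : ∀ (i j : ℤ) (n : ℕ),
    prd n (bas i) (bas j)
      = (Nat.factorial n : ℂ) • (((sp i j).coeff n).sum fun k c => c • (⇑D)^[k] (bas (i + j)))
  sp_zero : ∀ i j : ℤ, (G i = ⊥ ∨ G j = ⊥ ∨ G (i + j) = ⊥) → sp i j = 0
  supp_zero : G 0 ≠ ⊥
  abelian0 : ∀ n : ℕ, ∀ x ∈ G 0, ∀ y ∈ G 0, prd n x y = 0

/-- A Lie conformal algebra of class `𝒱`. -/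
structure ClassV (L : Type) [AddCommGroup L] [Module ℂ L]
    extends RankOneContext L where
  supp_one : G 1 ≠ ⊥
  supp_negone : G (-1) ≠ ⊥
  genV : ∀ N : Submodule ℂ L, (∀ x ∈ N, D x ∈ N) →
    (∀ n : ℕ, ∀ a ∈ N, ∀ b ∈ N, prd n a b ∈ N) →
    G 1 ≤ N → G 0 ≤ N → G (-1) ≤ N → N = ⊤
  ne_m11 : sp (-1) 1 ≠ 0
  ne_01 : sp 0 1 ≠ 0

/-!
Evaluated at scalars `∂` and `λ`, the axioms become identities between the structure polynomials
`p_{i,j}`. After rescaling the basis we may assume `p_{0,1} = λ - r` and `p_{-1,1} = -(∂ + t)`; put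
`s = (t + r) / 3`. The Jacobi identity for `(-1, 1, n + 1)` expresses the product
`p_{1,n+1}(∂ + λ, μ) p_{-1,n+2}(∂, λ)` through lower brackets. The result is the corresponding
product in the model algebra up to a constant defect, which is zero for `n = 0` and
`(n + 1)(tr - 2s²)` for `n > 0`. Without a defect the two factors are determined up to a unit and
its inverse. For `n = 1`, on the line `∂ + λ = 0`, both products separate the variables `μ` and `∂`,
which forces the defect to be zero. Hence `(t, r)` is `(2s, s)` or `(s, 2s)`, the shapes of
`CL₂(0, s)` and `CL₃(s)`. By induction all brackets with `L_{±1}` agree with the model up to units,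
which a second rescaling removes; the reflection `i ↦ -i` takes care of negative degrees. The Jacobi
identity for `(1, n, k)` then determines the remaining brackets.
-/

section BivariatePolynomials

open scoped Polynomial.Bivariate

variable {R : Type*} [CommRing R]

theorem evalEval_ext [IsDomain R] [Infinite R] {p q : R[X][Y]}
    (h : ∀ x y, p.evalEval x y = q.evalEval x y) : p = q := by
  ext1 n
  refine Polynomial.funext fun x => ?_
  have hmap : p.map (evalRingHom x) = q.map (evalRingHom x) :=
    Polynomial.funext fun y => by simpa only [map_evalRingHom_eval] using h x y
  simpa using congrArg (coeff · n) hmap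

theorem eval_eval_eq_evalEval {R : Type*} [CommSemiring R] (x : R) (p : R[X][X]) (q : R[X]) :
    (p.eval q).eval x = p.evalEval x (q.eval x) := by
  rw [← map_evalRingHom_eval, eval_map, ← coe_evalRingHom, eval₂_at_apply]

theorem exists_forall_eval_eq_evalEval (p : R[X][Y]) (u v : R[X]) :
    ∃ f : R[X], ∀ y, f.eval y = p.evalEval (u.eval y) (v.eval y) := by
  refine ⟨(p.map (compRingHom u)).eval v, fun y => ?_⟩
  induction p using Polynomial.induction_on' with
  | add p q hp hq => simp_all [evalEval_add]
  | monomial n a => simp [evalEval, eval_comp]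

-- Along the curves on which `A` and `B` equal `1`, the identity says that `F` divides `A` and `G`
-- divides `B`, with cofactors in one variable which are inverse to each other.
theorem exists_unit_mul_of_factorization [IsDomain R] [Infinite R] {F G A B : R[X][Y]}
    (μ ξ : R[X]) (hA : ∀ y, A.evalEval y (μ.eval y) = 1)
    (hB : ∀ y, B.evalEval (ξ.eval y) (y - ξ.eval y) = 1)
    (h : ∀ x l m, F.evalEval (x + l) m * G.evalEval x l
      = A.evalEval (x + l) m * B.evalEval x l) :
    ∃ c : Rˣ, F = C (C (c : R)) * A ∧ G = C (C ((c⁻¹ : Rˣ) : R)) * B := by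
  obtain ⟨f, hf⟩ := exists_forall_eval_eq_evalEval F X μ
  obtain ⟨g, hg⟩ := exists_forall_eval_eq_evalEval G ξ (X - ξ)
  simp only [eval_X, eval_sub] at hf hg
  have hFg (y m : R) : F.evalEval y m * g.eval y = A.evalEval y m := by
    simpa [hg, hB] using h (ξ.eval y) (y - ξ.eval y) m
  have hfG (x l : R) : f.eval (x + l) * G.evalEval x l = B.evalEval x l := by
    simpa [hf, hA] using h x l (μ.eval (x + l))
  have hfg : f * g = 1 := Polynomial.funext fun y => by simp [hf, hFg, hA]
  obtain ⟨_, ⟨c, rfl⟩, rfl⟩ := isUnit_iff.1 (IsUnit.of_mul_eq_one g hfg)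
  have hg' : g = C ((c⁻¹ : Rˣ) : R) :=
    left_inv_eq_right_inv (mul_comm g _ ▸ hfg) (by rw [← C_mul, c.mul_inv, C_1])
  refine ⟨c, evalEval_ext fun y m => ?_, evalEval_ext fun x l => ?_⟩
  · simp [evalEval_mul, ← hFg, hg', mul_left_comm (c : R)]
  · simp [evalEval_mul, ← hfG]

theorem eq_zero_of_mul_eq_mul_add {α β : Type*} {f u : α → R} {g v : β → R} {κ : R}
    {a₀ a₁ : α} {b₀ b₁ : β} (ha₀ : u a₀ = 0) (ha₁ : u a₁ = 1) (hb₀ : v b₀ = 0) (hb₁ : v b₁ = 1)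
    (h : ∀ a b, f a * g b = u a * v b + κ) : κ = 0 := by
  have h₀₀ := h a₀ b₀
  have h₀₁ := h a₀ b₁
  have h₁₀ := h a₁ b₀
  have h₁₁ := h a₁ b₁
  simp only [ha₀, ha₁, hb₀, hb₁] at h₀₀ h₀₁ h₁₀ h₁₁
  linear_combination -(f a₁ * g b₁) * h₀₀ - κ * h₁₁ + f a₁ * g b₀ * h₀₁ + κ * h₁₀

end BivariatePolynomials

section DegreeOne

variable {K : Type*} [Field K]

theorem exists_eq_C_mul_X_sub_C_of_natDegree_eq_one {p : K[X][X]} (hp : p.natDegree = 1)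
    (hcoeff : ∀ n, (p.coeff n).natDegree = 0) :
    ∃ (a : Kˣ) (r : K), p = C (C (a : K)) * (X - C (C r)) := by
  obtain ⟨f, hf, g, rfl⟩ := natDegree_eq_one.1 hp
  obtain ⟨a, rfl⟩ := natDegree_eq_zero.1 (by simpa using hcoeff 1)
  obtain ⟨b, rfl⟩ := natDegree_eq_zero.1 (by simpa using hcoeff 0)
  have ha : a ≠ 0 := by rintro rfl; exact hf C_0
  refine ⟨Units.mk0 a ha, -b / a, ?_⟩
  rw [Units.val_mk0, mul_sub, ← C_mul, ← C_mul, mul_div_cancel₀ _ ha, C_neg, C_neg, sub_neg_eq_add]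

theorem exists_eq_C_mul_C_X_add_C_of_natDegree_eq_zero {p : K[X][X]} (hp : p.natDegree = 0)
    (hcoeff : (p.coeff 0).natDegree = 1) :
    ∃ (b : Kˣ) (t : K), p = C (C (b : K)) * (C X + C (C t)) := by
  obtain ⟨q, rfl⟩ := natDegree_eq_zero.1 hp
  rw [coeff_C_zero] at hcoeff
  obtain ⟨b, hb, c, rfl⟩ := natDegree_eq_one.1 hcoeff
  refine ⟨Units.mk0 b hb, c / b, ?_⟩
  rw [Units.val_mk0, ← C_add, ← C_mul, mul_add, ← C_mul, mul_div_cancel₀ _ hb]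

end DegreeOne

/-- A `ℤ`-indexed family of polynomials `p i j` in `∂` (inner variable) and `λ` (outer variable)
satisfying, after evaluation at scalars, the identities which the Jacobi identity and
skew-symmetry impose on the structure polynomials of a graded Lie conformal algebra whose
components have rank at most one. -/
structure IsConformalFamily {R : Type*} [CommRing R] (p : ℤ → ℤ → R[X][X]) : Prop where
  jacobi : ∀ (i j k : ℤ) (x l m : R),
    (p j k).evalEval (x + l) m * (p i (j + k)).evalEval x l
        - (p i k).evalEval (x + m) l * (p j (i + k)).evalEval x m
      = (p i j).evalEval (-l - m) l * (p (i + j) k).evalEval x (l + m)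
  skew : ∀ (i j : ℤ) (x l : R), (p i j).evalEval x l = -(p j i).evalEval x (-l - x)

/-- The structure polynomials with respect to the basis `k i • L i`. -/
def rescaleBasis {R : Type*} [CommRing R] (k : ℤ → Rˣ) (p : ℤ → ℤ → R[X][X]) (i j : ℤ) :
    R[X][X] :=
  C (C ((k i * k j / k (i + j) : Rˣ) : R)) * p i j

/-- The structure polynomials with respect to the basis `-L (-i)`. -/
def reflectBasis {R : Type*} [CommRing R] (p : ℤ → ℤ → R[X][X]) (i j : ℤ) : R[X][X] :=
  -p (-i) (-j)

section Families

variable {R : Type*} [CommRing R] {p : ℤ → ℤ → R[X][X]}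

theorem evalEval_rescaleBasis (k : ℤ → Rˣ) (p : ℤ → ℤ → R[X][X]) (i j : ℤ) (x l : R) :
    (rescaleBasis k p i j).evalEval x l
      = ((k i * k j / k (i + j) : Rˣ) : R) * (p i j).evalEval x l := by
  rw [rescaleBasis, evalEval_mul, evalEval_C, eval_C]

theorem rescaleBasis_mul (k k' : ℤ → Rˣ) (p : ℤ → ℤ → R[X][X]) :
    rescaleBasis (k * k') p = rescaleBasis k (rescaleBasis k' p) := by
  funext i j
  simp only [rescaleBasis, ← mul_assoc, ← C_mul, ← Units.val_mul, Pi.mul_apply,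
    div_mul_div_comm, mul_right_comm _ (k' i)]

namespace IsConformalFamily

theorem rescale (hp : IsConformalFamily p) (k : ℤ → Rˣ) :
    IsConformalFamily (rescaleBasis k p) where
  jacobi i j n x l m := by
    simp only [evalEval_rescaleBasis, div_eq_mul_inv, Units.val_mul, add_left_comm j, ← add_assoc]
    have hj := (k (j + n)).mul_inv
    have hi := (k (i + n)).mul_inv
    have hij := (k (i + j)).mul_inv
    linear_combination ((k i : R) * k j * k n * ((k (i + j + n))⁻¹ : Rˣ))
      * (hp.jacobi i j n x l m
        + (p j n).evalEval (x + l) m * (p i (j + n)).evalEval x l * hj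
        - (p i n).evalEval (x + m) l * (p j (i + n)).evalEval x m * hi
        - (p i j).evalEval (-l - m) l * (p (i + j) n).evalEval x (l + m) * hij)
  skew i j x l := by
    rw [evalEval_rescaleBasis, evalEval_rescaleBasis, hp.skew, mul_comm (k i), add_comm i,
      mul_neg]

theorem reflect (hp : IsConformalFamily p) : IsConformalFamily (reflectBasis p) where
  jacobi i j k x l m := by
    have h := hp.jacobi (-i) (-j) (-k) x l m
    simp only [← neg_add] at h
    simpa only [reflectBasis, evalEval_neg, neg_mul_neg] using h
  skew i j x l := by
    rw [reflectBasis, reflectBasis, evalEval_neg, evalEval_neg, hp.skew]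

end IsConformalFamily

end Families

/-- The common shape of the structure polynomials of `CL₂(0, s)`, where `(t, r) = (2s, s)`, and
of `CL₃(s)`, where `(t, r) = (s, 2s)`: the brackets of `L i` and `L (-i)` involve `t`, the other
brackets with `L 0` involve `r`. -/
def modelFamily {R : Type*} [CommRing R] (t r s : R) (i j : ℤ) : R[X][X] :=
  if i + j = 0 then C (C (i : R)) * (C X + C (C t))
  else if i = 0 then C (C (j : R)) * (X - C (C r))
  else if j = 0 then C (C (i : R)) * (C X + X + C (C r))
  else C (C (i : R)) * C X + C (C (i + j : R)) * X + C (C (s * (i - j)))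

section Model

variable {R : Type*} [CommRing R]

theorem evalEval_modelFamily (t r s : R) (i j : ℤ) (x l : R) :
    (modelFamily t r s i j).evalEval x l
      = if i + j = 0 then i * (x + t)
        else if i = 0 then j * (l - r)
        else if j = 0 then i * (x + l + r)
        else i * x + (i + j) * l + s * (i - j) := by
  simp only [modelFamily, apply_ite (evalEval x l), evalEval_mul, evalEval_add, evalEval_sub,
    evalEval_C, evalEval_X, eval_C, eval_X]

theorem evalEval_modelFamily_skew (t r s : R) (i j : ℤ) (x l : R) :
    (modelFamily t r s i j).evalEval x l = -(modelFamily t r s j i).evalEval x (-l - x) := by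
  rw [evalEval_modelFamily, evalEval_modelFamily, add_comm j i]
  split_ifs with hij hi hj hj
  · have hji : (i : R) + j = 0 := by rw [← Int.cast_add, hij, Int.cast_zero]
    linear_combination (x + t) * hji
  · exact absurd (by rw [hi, hj, add_zero]) hij
  all_goals ring

theorem reflectBasis_modelFamily [IsDomain R] [Infinite R] (t r s : R) :
    reflectBasis (modelFamily t r s) = modelFamily t r s := by
  funext i j
  refine evalEval_ext fun x l => ?_
  rw [reflectBasis, evalEval_neg, evalEval_modelFamily, evalEval_modelFamily]
  simp only [← neg_add, neg_eq_zero, Int.cast_neg]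
  split_ifs <;> ring

theorem evalEval_modelFamily_jacobi {t r s : R} (hs : t + r = 3 * s)
    (htr : t * r = 2 * s ^ 2) {n : ℤ} (hn : 0 < n) (k : ℤ) (x l m : R) :
    (modelFamily t r s n k).evalEval (x + l) m * (modelFamily t r s 1 (n + k)).evalEval x l
        - (modelFamily t r s 1 k).evalEval (x + m) l * (modelFamily t r s n (1 + k)).evalEval x m
      = (modelFamily t r s 1 n).evalEval (-l - m) l
        * (modelFamily t r s (1 + n) k).evalEval x (l + m) := by
  obtain rfl : r = 3 * s - t := by linear_combination hs
  simp only [evalEval_modelFamily, add_left_comm n 1 k, ← add_assoc, hn.ne', one_ne_zero,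
    show 1 + n ≠ 0 by omega, if_false]
  rcases eq_or_ne k 0 with rfl | hk
  · split_ifs <;> first | omega | (push_cast; ring)
  rcases eq_or_ne (n + k) 0 with hnk | hnk
  · obtain rfl : k = -n := by omega
    rcases eq_or_ne n 1 with rfl | hn₁
    · split_ifs <;> first | contradiction | omega | (push_cast; ring)
    · split_ifs <;> first | omega | (push_cast; linear_combination (n : R) * htr)
  rcases eq_or_ne (1 + k) 0 with h1k | h1k
  · obtain rfl : k = -1 := by omega
    split_ifs <;> first | contradiction | omega | (push_cast; linear_combination (-n : R) * htr)
  rcases eq_or_ne (1 + n + k) 0 with h | h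
  · obtain rfl : k = -1 - n := by omega
    split_ifs <;> first | omega | (push_cast; ring)
  · simp only [hk, hnk, h1k, h, if_false]
    push_cast
    ring

theorem evalEval_modelFamily_jacobi_neg_one_one {t r s : R} (hs : t + r = 3 * s) {n : ℤ}
    (hn : 0 ≤ n) (x l m : R) :
    (modelFamily t r s 1 (n + 1)).evalEval (x + l) m
          * (modelFamily t r s (-1) (n + 2)).evalEval x l
        + (if n = 0 then 0 else (n + 1) * (t * r - 2 * s ^ 2))
      = (modelFamily t r s (-1) (n + 1)).evalEval (x + m) l
          * (modelFamily t r s 1 n).evalEval x m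
        + (modelFamily t r s (-1) 1).evalEval (-l - m) l
          * (modelFamily t r s 0 (n + 1)).evalEval x (l + m) := by
  obtain rfl : r = 3 * s - t := by linear_combination hs
  simp only [evalEval_modelFamily]
  rcases eq_or_ne n 0 with rfl | hn₀
  · norm_num
    ring
  · simp only [show 1 + (n + 1) ≠ 0 by omega, show n + 1 ≠ 0 by omega,
      show -1 + (n + 2) ≠ 0 by omega, show n + 2 ≠ 0 by omega, show -1 + (n + 1) ≠ 0 by omega,
      show 1 + n ≠ 0 by omega, show 0 + (n + 1) ≠ 0 by omega, hn₀, one_ne_zero, neg_eq_zero,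
      if_false, neg_add_cancel, if_true]
    push_cast
    ring

theorem exists_evalEval_modelFamily_one_ne_zero [CharZero R] (t r s : R) {n : ℤ} (hn : 0 ≤ n)
    (y : R) : ∃ m, (modelFamily t r s 1 n).evalEval y m ≠ 0 := by
  by_contra! h
  have h₀ := h 0
  have h₁ := h 1
  simp only [evalEval_modelFamily, show 1 + n ≠ 0 by omega, one_ne_zero, if_false,
    Int.cast_one] at h₀ h₁
  have hn' : ((n + 1 : ℤ) : R) ≠ 0 := Int.cast_ne_zero.2 (by omega)
  push_cast at hn'
  rcases eq_or_ne n 0 with rfl | hn₀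
  · simp only [if_true] at h₀ h₁
    exact one_ne_zero (by linear_combination h₁ - h₀)
  · simp only [hn₀, if_false] at h₀ h₁
    exact hn' (by linear_combination h₁ - h₀)

theorem modelFamily_one_ne_zero [Nontrivial R] (t r s : R) (i : ℤ) :
    modelFamily t r s 1 i ≠ 0 := fun h => one_ne_zero (α := R) <| by
  have h₀ := evalEval_modelFamily t r s 1 i 0 0
  have h₁ := evalEval_modelFamily t r s 1 i 1 0
  simp only [h, evalEval_zero, one_ne_zero, if_false, Int.cast_one] at h₀ h₁
  split_ifs at h₀ h₁ <;> linear_combination h₀ - h₁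

theorem pCL2_zero_eq_modelFamily (s : ℂ) : pCL2 0 s = modelFamily (2 * s) s s := by
  funext i j
  refine evalEval_ext fun x l => ?_
  rw [evalEval_modelFamily]
  simp only [pCL2, Pc, Pd, Pl, evalEval_add, evalEval_mul, evalEval_C, evalEval_X, eval_C, eval_X]
  split_ifs with hij hi hj
  · obtain rfl : j = -i := by omega
    push_cast
    ring
  · rw [hi, Int.cast_zero]
    ring
  · rw [hj, Int.cast_zero]
    ring
  · ring

theorem pCL3_eq_modelFamily (s : ℂ) : pCL3 s = modelFamily s (2 * s) s := by
  funext i j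
  simp only [pCL3, modelFamily, Pc, Pd, Pl]
  split_ifs
  · rfl
  · rw [C_neg, C_neg]
    ring
  · rfl
  · rfl

end Model

section Rows

theorem exists_map_add_one_eq_mul {G : Type*} [Group G] (c : ℤ → G) :
    ∃ k : ℤ → G, k 0 = 1 ∧ ∀ n, k (n + 1) = k n * c n := by
  refine ⟨fun n => Int.inductionOn' (motive := fun _ => G) n 0 1 (fun n _ g => g * c n)
    (fun n _ g => g * (c (n - 1))⁻¹), Int.inductionOn'_self .., fun n => ?_⟩
  rcases le_or_gt 0 n with hn | hn
  · exact Int.inductionOn'_add_one hn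
  · obtain ⟨m, rfl⟩ : ∃ m, n = m - 1 := ⟨n + 1, by ring⟩
    beta_reduce
    rw [Int.inductionOn'_sub_one (by omega), inv_mul_cancel_right, sub_add_cancel]

namespace IsConformalFamily

variable {R : Type*} [CommRing R] {p : ℤ → ℤ → R[X][X]} {t r s : R}

theorem one_mul_neg_one_eq (hp : IsConformalFamily p) {n : ℤ} {c : Rˣ}
    (h₁ : p (-1) 1 = modelFamily t r s (-1) 1)
    (h₀n : p 0 (n + 1) = modelFamily t r s 0 (n + 1))
    (h₁n : p 1 n = C (C (c : R)) * modelFamily t r s 1 n)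
    (hneg : p (-1) (n + 1) = C (C ((c⁻¹ : Rˣ) : R)) * modelFamily t r s (-1) (n + 1))
    (x l m : R) :
    (p 1 (n + 1)).evalEval (x + l) m * (p (-1) (n + 2)).evalEval x l
      = (modelFamily t r s (-1) (n + 1)).evalEval (x + m) l
          * (modelFamily t r s 1 n).evalEval x m
        + (modelFamily t r s (-1) 1).evalEval (-l - m) l
          * (modelFamily t r s 0 (n + 1)).evalEval x (l + m) := by
  have h := hp.jacobi (-1) 1 (n + 1) x l m
  rw [neg_add_cancel, show 1 + (n + 1) = n + 2 by ring, show -1 + (n + 1) = n by ring, h₁, h₀n,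
    h₁n, hneg, evalEval_mul, evalEval_mul, evalEval_C, evalEval_C, eval_C, eval_C] at h
  linear_combination h + (modelFamily t r s (-1) (n + 1)).evalEval (x + m) l
    * (modelFamily t r s 1 n).evalEval x m * c.inv_mul

theorem zero_add_one_eq [IsDomain R] [CharZero R] (hp : IsConformalFamily p) {n : ℤ} (hn : 0 ≤ n)
    {c : Rˣ} (h₀ : p 0 1 = modelFamily t r s 0 1) (h₀n : p 0 n = modelFamily t r s 0 n)
    (h₁n : p 1 n = C (C (c : R)) * modelFamily t r s 1 n) :
    p 0 (n + 1) = modelFamily t r s 0 (n + 1) :=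
  evalEval_ext fun x l => by
    obtain ⟨m, hm⟩ := exists_evalEval_modelFamily_one_ne_zero t r s hn (x + l)
    have h := hp.jacobi 0 1 n x l m
    simp only [h₀, h₀n, h₁n, zero_add, evalEval_mul, evalEval_C, eval_C, add_comm 1 n] at h
    refine mul_left_cancel₀ (mul_ne_zero c.ne_zero hm) ?_
    simp only [evalEval_modelFamily, zero_add, one_ne_zero, show 1 + n ≠ 0 by omega,
      show n + 1 ≠ 0 by omega, if_false, if_true] at h ⊢
    rcases eq_or_ne n 0 with rfl | hn₀
    · simp only [if_true, Int.cast_zero, Int.cast_one, zero_add] at h ⊢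
      linear_combination h
    · simp only [hn₀, if_false] at h ⊢
      push_cast at h ⊢
      linear_combination h

variable [IsDomain R] [Infinite R]

theorem add_row_eq (hp : IsConformalFamily p) {q : ℤ → ℤ → R[X][X]} {i j : ℤ}
    (hq : ∀ k x l m,
      (q j k).evalEval (x + l) m * (q i (j + k)).evalEval x l
          - (q i k).evalEval (x + m) l * (q j (i + k)).evalEval x m
        = (q i j).evalEval (-l - m) l * (q (i + j) k).evalEval x (l + m))
    (hne : ∀ y, ∃ l, (q i j).evalEval y l ≠ 0) (hi : p i = q i) (hj : p j = q j) :
    p (i + j) = q (i + j) := by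
  funext k
  refine evalEval_ext fun x y => ?_
  obtain ⟨l, hl⟩ := hne (-y)
  have hp' := hp.jacobi i j k x l (y - l)
  have hq' := hq k x l (y - l)
  rw [hi, hj, hq', show -l - (y - l) = -y by ring, add_sub_cancel] at hp'
  exact (mul_left_cancel₀ hl hp').symm

theorem swap_eq (hp : IsConformalFamily p) {i j : ℤ} (h : p i j = modelFamily t r s i j) :
    p j i = modelFamily t r s j i :=
  evalEval_ext fun x l => by
    rw [hp.skew, h, evalEval_modelFamily_skew t r s j]

theorem zero_zero_eq (hp : IsConformalFamily p) (h₀ : p 0 1 = modelFamily t r s 0 1) :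
    p 0 0 = 0 := by
  have hmul : p 0 0 * C (X + C r) = 0 := evalEval_ext fun x l => by
    have h := hp.jacobi 0 0 1 0 l (-x - l)
    rw [show -l - (-x - l) = x by ring] at h
    simp only [add_zero, zero_add, h₀, evalEval_modelFamily, one_ne_zero, if_false, if_true,
      Int.cast_one] at h
    simp only [evalEval_mul, evalEval_C, evalEval_zero, eval_add, eval_X, eval_C]
    linear_combination h
  exact (mul_eq_zero.1 hmul).resolve_right (C_ne_zero.2 (X_add_C_ne_zero r))

theorem zero_neg_one_eq (hp : IsConformalFamily p) (h₀ : p 0 1 = modelFamily t r s 0 1)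
    (h₁ : p (-1) 1 = modelFamily t r s (-1) 1) : p 0 (-1) = modelFamily t r s 0 (-1) :=
  evalEval_ext fun y l => by
    -- At `x = 1 - t` the factor `-(x + t)` coming from `p (-1) 1` is `-1`.
    have h := hp.jacobi 0 (-1) 1 (1 - t) l (-y - l)
    rw [show -l - (-y - l) = y by ring] at h
    norm_num [h₀, h₁, evalEval_modelFamily, hp.zero_zero_eq h₀] at h ⊢
    linear_combination h

end IsConformalFamily

end Rows

section Ladder

/-- The `n`-th rung of the ladder along which a conformal family is compared with the model: it
consists of the brackets through which `L (±1)` move between `L n` and `L (n + 1)`, and on it the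
two families agree up to a unit `c` measuring the ratio of the basis vectors at `n + 1` and `n`. -/
structure IsModelRung {R : Type*} [CommRing R] (p : ℤ → ℤ → R[X][X]) (t r s : R) (n : ℤ)
    (c : Rˣ) : Prop where
  zero_left : p 0 n = modelFamily t r s 0 n
  zero_right : p 0 (n + 1) = modelFamily t r s 0 (n + 1)
  one : p 1 n = C (C (c : R)) * modelFamily t r s 1 n
  neg_one : p (-1) (n + 1) = C (C ((c⁻¹ : Rˣ) : R)) * modelFamily t r s (-1) (n + 1)

theorem IsModelRung.of_reflectBasis {R : Type*} [CommRing R] [IsDomain R] [Infinite R]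
    {p : ℤ → ℤ → R[X][X]} {t r s : R} {n : ℤ} {c : Rˣ}
    (h : IsModelRung (reflectBasis p) t r s n c) : IsModelRung p t r s (-n - 1) c⁻¹ := by
  have hM (i j : ℤ) (d : R[X][X]) (hij : reflectBasis p i j = d * modelFamily t r s i j) :
      p (-i) (-j) = d * modelFamily t r s (-i) (-j) := by
    rw [← reflectBasis_modelFamily t r s, reflectBasis, reflectBasis] at hij
    linear_combination -hij
  have h₁ := hM 1 n _ h.one
  have hneg := hM (-1) (n + 1) _ h.neg_one
  have hl := hM 0 n 1 (by rw [one_mul, h.zero_left])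
  have hr := hM 0 (n + 1) 1 (by rw [one_mul, h.zero_right])
  rw [neg_neg, neg_add'] at hneg
  rw [neg_zero, one_mul] at hl
  rw [neg_zero, one_mul, neg_add'] at hr
  exact ⟨hr, by rw [sub_add_cancel, hl], hneg, by rw [sub_add_cancel, inv_inv, h₁]⟩

namespace IsConformalFamily

section Domain

variable {R : Type*} [CommRing R] [IsDomain R] [Infinite R] {p : ℤ → ℤ → R[X][X]} {t r s : R}

theorem isModelRung_zero (hp : IsConformalFamily p) (h₀ : p 0 1 = modelFamily t r s 0 1)
    (h₁ : p (-1) 1 = modelFamily t r s (-1) 1) : IsModelRung p t r s 0 1 := by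
  have h₀₀ : p 0 0 = modelFamily t r s 0 0 := by simp [hp.zero_zero_eq h₀, modelFamily]
  refine ⟨h₀₀, by rwa [zero_add], ?_, ?_⟩
  · rw [hp.swap_eq h₀, Units.val_one, C_1, C_1, one_mul]
  · rw [zero_add, h₁, inv_one, Units.val_one, C_1, C_1, one_mul]

theorem isModelRung_neg_one (hp : IsConformalFamily p) (h₀ : p 0 1 = modelFamily t r s 0 1)
    (h₁ : p (-1) 1 = modelFamily t r s (-1) 1) : IsModelRung p t r s (-1) 1 := by
  have h₀₀ : p 0 0 = modelFamily t r s 0 0 := by simp [hp.zero_zero_eq h₀, modelFamily]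
  have hneg := hp.zero_neg_one_eq h₀ h₁
  refine ⟨hneg, by rwa [neg_add_cancel], ?_, ?_⟩
  · rw [hp.swap_eq h₁, Units.val_one, C_1, C_1, one_mul]
  · rw [neg_add_cancel, hp.swap_eq hneg, inv_one, Units.val_one, C_1, C_1, one_mul]

end Domain

variable {K : Type*} [Field K] [CharZero K] {p : ℤ → ℤ → K[X][X]} {t r s : K}

theorem exists_isModelRung_add_one (hp : IsConformalFamily p) (hs : t + r = 3 * s)
    (h₀ : p 0 1 = modelFamily t r s 0 1) (h₁ : p (-1) 1 = modelFamily t r s (-1) 1) {n : ℤ}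
    (hn : 0 ≤ n) (htr : n = 0 ∨ t * r = 2 * s ^ 2) {c : Kˣ} (h : IsModelRung p t r s n c) :
    ∃ d : Kˣ, IsModelRung p t r s (n + 1) d := by
  have hdefect : (if n = 0 then 0 else (n + 1) * (t * r - 2 * s ^ 2) : K) = 0 := by
    rcases htr with hn₀ | htr
    · exact if_pos hn₀
    · rw [htr, sub_self, mul_zero, ite_self]
  have hn₂ : ((n : K) + 2) ≠ 0 := by exact_mod_cast (show n + 2 ≠ 0 by omega)
  obtain ⟨d, hone, hneg⟩ := exists_unit_mul_of_factorization
    (F := p 1 (n + 1)) (G := p (-1) (n + 2)) (A := modelFamily t r s 1 (n + 1))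
    (B := modelFamily t r s (-1) (n + 2)) (C ((n + 2 : K)⁻¹) * (C (1 + s * n) - X))
    (C ((n + 2 : K)⁻¹) * (C ((n : K) + 1) * X - C (s * (n + 3) + 1)))
    (fun y => by
      simp only [evalEval_modelFamily, show 1 + (n + 1) ≠ 0 by omega, show n + 1 ≠ 0 by omega,
        one_ne_zero, if_false, eval_mul, eval_sub, eval_C, eval_X]
      push_cast
      field_simp
      ring)
    (fun y => by
      simp only [evalEval_modelFamily, show -1 + (n + 2) ≠ 0 by omega, show n + 2 ≠ 0 by omega,
        neg_eq_zero, one_ne_zero, if_false, eval_mul, eval_sub, eval_C, eval_X]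
      push_cast
      field_simp
      ring)
    (fun x l m => by
      rw [hp.one_mul_neg_one_eq h₁ h.zero_right h.one h.neg_one,
        ← evalEval_modelFamily_jacobi_neg_one_one hs hn, hdefect, add_zero])
  exact ⟨d, h.zero_right, hp.zero_add_one_eq (by omega) h₀ h.zero_right hone, hone,
    by rw [add_assoc, one_add_one_eq_two, hneg]⟩

theorem mul_eq_two_mul_sq (hp : IsConformalFamily p) (hs : t + r = 3 * s)
    (h₀ : p 0 1 = modelFamily t r s 0 1) (h₁ : p (-1) 1 = modelFamily t r s (-1) 1) :
    t * r = 2 * s ^ 2 := by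
  obtain ⟨c, hc⟩ := hp.exists_isModelRung_add_one hs h₀ h₁ le_rfl (.inl rfl)
    (hp.isModelRung_zero h₀ h₁)
  rw [zero_add] at hc
  have hκ : 2 * (t * r - 2 * s ^ 2) = 0 := by
    refine eq_zero_of_mul_eq_mul_add (f := fun m => (p 1 (1 + 1)).evalEval 0 m)
      (g := fun x => (p (-1) (1 + 2)).evalEval x (-x)) (u := fun m => 3 * m - s)
      (v := fun x => -3 * x - 4 * s) (a₀ := s / 3) (a₁ := (1 + s) / 3) (b₀ := -4 * s / 3)
      (b₁ := -(4 * s + 1) / 3) (by ring) (by ring) (by ring) (by ring) fun m x => ?_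
    have h := hp.one_mul_neg_one_eq h₁ hc.zero_right hc.one hc.neg_one x (-x) m
    rw [← evalEval_modelFamily_jacobi_neg_one_one hs zero_le_one, add_neg_cancel] at h
    norm_num [evalEval_modelFamily] at h ⊢
    linear_combination h
  exact sub_eq_zero.1 ((mul_eq_zero.1 hκ).resolve_left two_ne_zero)

theorem exists_isModelRung_of_nonneg (hp : IsConformalFamily p) (hs : t + r = 3 * s)
    (h₀ : p 0 1 = modelFamily t r s 0 1) (h₁ : p (-1) 1 = modelFamily t r s (-1) 1) {n : ℤ}
    (hn : 0 ≤ n) : ∃ c : Kˣ, IsModelRung p t r s n c := by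
  induction n, hn using Int.leInduction with
  | base => exact ⟨1, hp.isModelRung_zero h₀ h₁⟩
  | succ n hn ih =>
    obtain ⟨c, hc⟩ := ih
    exact hp.exists_isModelRung_add_one hs h₀ h₁ hn (.inr (hp.mul_eq_two_mul_sq hs h₀ h₁)) hc

theorem exists_isModelRung (hp : IsConformalFamily p) (hs : t + r = 3 * s)
    (h₀ : p 0 1 = modelFamily t r s 0 1) (h₁ : p (-1) 1 = modelFamily t r s (-1) 1) (n : ℤ) :
    ∃ c : Kˣ, IsModelRung p t r s n c := by
  rcases le_or_gt 0 n with hn | hn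
  · exact hp.exists_isModelRung_of_nonneg hs h₀ h₁ hn
  · have hM (i j : ℤ) (h : p (-i) (-j) = modelFamily t r s (-i) (-j)) :
        reflectBasis p i j = modelFamily t r s i j := by
      rw [← reflectBasis_modelFamily, reflectBasis, reflectBasis, h]
    have h₀' := hM 0 1 (hp.zero_neg_one_eq h₀ h₁)
    have h₁' := hM (-1) 1 (by rw [neg_neg]; exact hp.swap_eq h₁)
    obtain ⟨c, hc⟩ := hp.reflect.exists_isModelRung_of_nonneg hs h₀' h₁'
      (show 0 ≤ -n - 1 by omega)
    exact ⟨c⁻¹, by simpa using hc.of_reflectBasis⟩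

theorem exists_forall_isModelRung (hp : IsConformalFamily p) (hs : t + r = 3 * s)
    (h₀ : p 0 1 = modelFamily t r s 0 1) (h₁ : p (-1) 1 = modelFamily t r s (-1) 1) :
    ∃ c : ℤ → Kˣ, c 0 = 1 ∧ c (-1) = 1 ∧ ∀ n, IsModelRung p t r s n (c n) := by
  choose d hd using hp.exists_isModelRung hs h₀ h₁
  refine ⟨fun n => if n = 0 ∨ n = -1 then 1 else d n, if_pos (.inl rfl), if_pos (.inr rfl),
    fun n => ?_⟩
  beta_reduce
  split_ifs with hn
  · rcases hn with rfl | rfl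
    · exact hp.isModelRung_zero h₀ h₁
    · exact hp.isModelRung_neg_one h₀ h₁
  · exact hd n

end IsConformalFamily

end Ladder

section Recognition

namespace IsConformalFamily

section Domain

variable {R : Type*} [CommRing R] [IsDomain R] [CharZero R] {p : ℤ → ℤ → R[X][X]} {t r s : R}

theorem row_eq_of_pos (hp : IsConformalFamily p) (hs : t + r = 3 * s) (htr : t * r = 2 * s ^ 2)
    (h₁ : p 1 = modelFamily t r s 1) {n : ℤ} (hn : 0 < n) : p n = modelFamily t r s n := by
  rw [← Int.add_one_le_iff, zero_add] at hn
  induction n, hn using Int.leInduction with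
  | base => exact h₁
  | succ n hn ih =>
    rw [add_comm]
    exact hp.add_row_eq (evalEval_modelFamily_jacobi hs htr hn)
      (exists_evalEval_modelFamily_one_ne_zero t r s (zero_le_one.trans hn)) h₁ ih

theorem eq_modelFamily_of_rows (hp : IsConformalFamily p) (hs : t + r = 3 * s)
    (htr : t * r = 2 * s ^ 2) (h₀ : p 0 = modelFamily t r s 0) (h₁ : p 1 = modelFamily t r s 1)
    (hneg : p (-1) = modelFamily t r s (-1)) : p = modelFamily t r s := by
  funext n
  rcases lt_trichotomy 0 n with hn | rfl | hn
  · exact hp.row_eq_of_pos hs htr h₁ hn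
  · exact h₀
  · have hrow : reflectBasis p 1 = modelFamily t r s 1 := by
      rw [← reflectBasis_modelFamily]
      funext j
      rw [reflectBasis, reflectBasis, hneg]
    funext j
    have h := congrFun (hp.reflect.row_eq_of_pos hs htr hrow (neg_pos.2 hn)) (-j)
    rw [← reflectBasis_modelFamily, reflectBasis, reflectBasis, neg_neg, neg_neg] at h
    exact neg_injective h

end Domain

variable {K : Type*} [Field K] [CharZero K] {p : ℤ → ℤ → K[X][X]} {t r s : K}

theorem exists_rescaleBasis_eq_modelFamily (hp : IsConformalFamily p) (hs : t + r = 3 * s)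
    (h₀ : p 0 1 = modelFamily t r s 0 1) (h₁ : p (-1) 1 = modelFamily t r s (-1) 1) :
    ∃ k : ℤ → Kˣ, rescaleBasis k p = modelFamily t r s := by
  obtain ⟨c, hc₀, hcneg, hc⟩ := hp.exists_forall_isModelRung hs h₀ h₁
  obtain ⟨k, hk₀, hk⟩ := exists_map_add_one_eq_mul c
  have hk₁ : k 1 = 1 := by simpa [hk₀, hc₀] using hk 0
  have hkneg : k (-1) = 1 := by simpa [hk₀, hcneg, eq_comm] using hk (-1)
  refine ⟨k, (hp.rescale k).eq_modelFamily_of_rows hs (hp.mul_eq_two_mul_sq hs h₀ h₁) ?_ ?_ ?_⟩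
  · funext n
    rw [rescaleBasis, (hc n).zero_left, hk₀, zero_add, one_mul, div_self', Units.val_one, C_1,
      C_1, one_mul]
  · funext n
    rw [rescaleBasis, (hc n).one, ← mul_assoc, ← C_mul, ← C_mul, ← Units.val_mul, hk₁, one_mul,
      add_comm, hk, div_mul_cancel_left, inv_mul_cancel, Units.val_one, C_1, C_1, one_mul]
  · funext n
    obtain ⟨n, rfl⟩ : ∃ m, n = m + 1 := ⟨n - 1, by ring⟩
    rw [rescaleBasis, (hc n).neg_one, ← mul_assoc, ← C_mul, ← C_mul, ← Units.val_mul, hkneg,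
      one_mul, neg_add_cancel_comm_assoc, hk, mul_div_cancel_left, mul_inv_cancel, Units.val_one,
      C_1, C_1, one_mul]

theorem exists_rescaleBasis_eq (hp : IsConformalFamily p) {a b : Kˣ}
    (h₀ : p 0 1 = C (C (a : K)) * (X - C (C r)))
    (h₁ : p (-1) 1 = C (C (b : K)) * (C X + C (C t))) :
    ∃ (k : ℤ → Kˣ) (s : K),
      rescaleBasis k p = modelFamily (2 * s) s s ∨ rescaleBasis k p = modelFamily s (2 * s) s := by
  obtain ⟨s, hs⟩ : ∃ s, t + r = 3 * s := ⟨(t + r) / 3, by ring⟩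
  let k₀ : ℤ → Kˣ := fun n => if n = 0 then a⁻¹ else if n = -1 then -(a * b)⁻¹ else 1
  have hq := hp.rescale k₀
  have hq₀ : rescaleBasis k₀ p 0 1 = modelFamily t r s 0 1 := evalEval_ext fun x l => by
    simp [evalEval_rescaleBasis, evalEval_modelFamily, evalEval_mul, h₀, k₀]
  have hq₁ : rescaleBasis k₀ p (-1) 1 = modelFamily t r s (-1) 1 := evalEval_ext fun x l => by
    simp [evalEval_rescaleBasis, evalEval_modelFamily, evalEval_mul, evalEval_C, h₁, k₀]
  obtain ⟨k, hk⟩ := hq.exists_rescaleBasis_eq_modelFamily hs hq₀ hq₁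
  rw [← rescaleBasis_mul] at hk
  have hfactor : (t - 2 * s) * (t - s) = 0 := by
    linear_combination t * hs - hq.mul_eq_two_mul_sq hs hq₀ hq₁
  obtain rfl : r = 3 * s - t := by linear_combination hs
  refine ⟨k * k₀, s, (mul_eq_zero.1 hfactor).imp (fun h => ?_) fun h => ?_⟩
  · rw [hk, sub_eq_zero.1 h]
    ring_nf
  · rw [hk, sub_eq_zero.1 h]
    ring_nf

end IsConformalFamily

end Recognition

open Finset.HasAntidiagonal (antidiagonal mem_antidiagonal)

section DividedPowers

/-- The divided power `x ^ n / n!`; the `λ`-bracket is the generating series of the `n`-th products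
in the divided powers of `λ`. -/
def dividedPow (K : Type*) [Field K] {A : Type*} [CommRing A] [Algebra K A] (x : A) (n : ℕ) : A :=
  (n.factorial : K)⁻¹ • x ^ n

variable (K : Type*) [Field K] [CharZero K] {A : Type*} [CommRing A] [Algebra K A]

theorem factorial_smul_dividedPow (x : A) (n : ℕ) :
    (n.factorial : K) • dividedPow K x n = x ^ n := by
  rw [dividedPow, smul_smul, mul_inv_cancel₀ (Nat.cast_ne_zero.2 n.factorial_ne_zero), one_smul]

theorem choose_smul_dividedPow (x : A) (j k : ℕ) :
    ((j + k).choose j : K) • dividedPow K x (j + k) = dividedPow K x j * dividedPow K x k := by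
  rw [dividedPow, dividedPow, dividedPow, smul_smul, Nat.cast_add_choose, smul_mul_smul_comm,
    pow_add]
  have := (Nat.cast_ne_zero (R := K)).2 (j + k).factorial_ne_zero
  congr 1
  field_simp

theorem succ_smul_dividedPow (x : A) (n : ℕ) :
    ((n + 1 : ℕ) : K) • dividedPow K x (n + 1) = x * dividedPow K x n := by
  simpa [dividedPow, mul_comm] using choose_smul_dividedPow K x n 1

theorem dividedPow_add (x y : A) (n : ℕ) :
    dividedPow K (x + y) n
      = ∑ i ∈ antidiagonal n, dividedPow K x i.1 * dividedPow K y i.2 := by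
  rw [dividedPow, (Commute.all x y).add_pow', Finset.smul_sum]
  refine Finset.sum_congr rfl fun i hi => ?_
  obtain rfl := mem_antidiagonal.1 hi
  have := (Nat.cast_ne_zero (R := K)).2 (i.1 + i.2).factorial_ne_zero
  rw [dividedPow, dividedPow, smul_mul_smul_comm, ← Nat.cast_smul_eq_nsmul K, smul_smul,
    Nat.cast_add_choose]
  congr 1
  field_simp

end DividedPowers

theorem sum_range_sum_antidiagonal {M : Type*} [AddCommMonoid M] {N : ℕ} {f : ℕ → ℕ → M}
    (h : ∀ j k, N ≤ j + k → f j k = 0) :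
    ∑ n ∈ Finset.range N, ∑ i ∈ antidiagonal n, f i.1 i.2
      = ∑ j ∈ Finset.range N, ∑ k ∈ Finset.range N, f j k := by
  simp only [Finset.Nat.sum_antidiagonal_eq_sum_range_succ f, Finset.sum_range_diag_flip]
  refine Finset.sum_congr rfl fun j _ => Finset.sum_subset (by simp) fun k _ hk => h j k ?_
  rw [Finset.mem_range, not_lt] at hk
  omega

namespace LieConformalAlgebra

variable {L : Type} [AddCommGroup L] [Module ℂ L] (C : LieConformalAlgebra L)

theorem applyP_eq_aeval (q : ℂ[X]) (x : L) : C.applyP q x = aeval C.D q x := by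
  simp only [applyP, aeval_eq_sum_range, sum_over_range, zero_smul, implies_true,
    LinearMap.sum_apply, LinearMap.smul_apply, Module.End.pow_apply]

theorem finite_support_smul_prd (c : ℕ → ℂ) (a b : L) :
    (Function.support fun n => c n • C.prd n a b).Finite := by
  obtain ⟨N, hN⟩ := C.bound a b
  refine (Finset.range N).finite_toSet.subset fun n hn => ?_
  by_contra hnN
  exact hn (by beta_reduce; rw [hN n (by simpa using hnN), smul_zero])

/-- The `λ`-bracket `[a_λ b]` at a scalar `λ = l`, as a bilinear map. -/
def lambdaBracket (l : ℂ) : L →ₗ[ℂ] L →ₗ[ℂ] L :=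
  LinearMap.mk₂ ℂ (fun a b => ∑ᶠ n, dividedPow ℂ l n • C.prd n a b)
    (fun a a' b => by
      simp only [map_add, LinearMap.add_apply, smul_add]
      exact finsum_add_distrib (C.finite_support_smul_prd _ a b) (C.finite_support_smul_prd _ a' b))
    (fun z a b => by
      simp only [map_smul, LinearMap.smul_apply, smul_finsum, smul_comm z])
    (fun a b b' => by
      simp only [map_add, smul_add]
      exact finsum_add_distrib (C.finite_support_smul_prd _ a b) (C.finite_support_smul_prd _ a b'))
    (fun z a b => by
      simp only [map_smul, smul_finsum, smul_comm z])

variable {C}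

theorem lambdaBracket_eq_sum (l : ℂ) {a b : L} {N : ℕ} (hN : ∀ n, N ≤ n → C.prd n a b = 0) :
    C.lambdaBracket l a b = ∑ n ∈ Finset.range N, dividedPow ℂ l n • C.prd n a b := by
  refine finsum_eq_sum_of_support_subset _ fun n hn => ?_
  by_contra hnN
  exact hn (by beta_reduce; rw [hN n (by simpa using hnN), smul_zero])

theorem lambdaBracket_D_left (l : ℂ) (a b : L) :
    C.lambdaBracket l (C.D a) b = -l • C.lambdaBracket l a b := by
  obtain ⟨N, hN⟩ := C.bound a b
  have hN' (n : ℕ) (hn : N + 1 ≤ n) : C.prd n (C.D a) b = 0 := by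
    rw [C.sesq, hN _ (by omega), smul_zero]
  rw [lambdaBracket_eq_sum l hN, lambdaBracket_eq_sum l hN', Finset.sum_range_succ',
    Finset.smul_sum]
  simp only [C.sesq, Nat.cast_zero, neg_zero, zero_smul, smul_zero, add_zero,
    add_tsub_cancel_right, smul_smul, neg_mul, ← succ_smul_dividedPow ℂ l, smul_eq_mul,
    mul_comm (dividedPow ℂ l _)]

theorem lambdaBracket_D_right (l : ℂ) (a b : L) :
    C.lambdaBracket l a (C.D b) = C.D (C.lambdaBracket l a b) + l • C.lambdaBracket l a b := by
  have hprd (n : ℕ) : C.prd n a (C.D b) = C.D (C.prd n a b) - C.prd n (C.D a) b := by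
    rw [C.sesq, C.sesq', neg_smul, sub_neg_eq_add]
  obtain ⟨N, hN⟩ := C.bound a b
  obtain ⟨N', hN'⟩ := C.bound (C.D a) b
  have hD : C.lambdaBracket l a (C.D b)
      = C.D (C.lambdaBracket l a b) - C.lambdaBracket l (C.D a) b := by
    rw [lambdaBracket_eq_sum (N := max N N') l fun n hn => hN n (le_of_max_le_left hn),
      lambdaBracket_eq_sum (N := max N N') l fun n hn => hN' n (le_of_max_le_right hn),
      lambdaBracket_eq_sum (N := max N N') l fun n hn => by
        rw [hprd, hN n (le_of_max_le_left hn), hN' n (le_of_max_le_right hn), map_zero, sub_zero]]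
    simp only [hprd, smul_sub, Finset.sum_sub_distrib, map_sum, map_smul]
  rw [hD, lambdaBracket_D_left, neg_smul, sub_neg_eq_add]

theorem lambdaBracket_aeval_left (l : ℂ) (q : ℂ[X]) (a b : L) :
    C.lambdaBracket l (aeval C.D q a) b = q.eval (-l) • C.lambdaBracket l a b := by
  induction q using Polynomial.induction_on with
  | C z => simp [Module.algebraMap_end_apply]
  | add p q hp hq => simp only [map_add, LinearMap.add_apply, hp, hq, eval_add, add_smul]
  | monomial n z ih =>
    rw [pow_succ', mul_left_comm, map_mul, Module.End.mul_apply, aeval_X, lambdaBracket_D_left, ih,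
      smul_smul, eval_mul (p := X), eval_X]

theorem lambdaBracket_aeval_right (l : ℂ) (q : ℂ[X]) (a b : L) :
    C.lambdaBracket l a (aeval C.D q b)
      = aeval C.D (q.comp (X + Polynomial.C l)) (C.lambdaBracket l a b) := by
  induction q using Polynomial.induction_on with
  | C z => simp [Module.algebraMap_end_apply]
  | add p q hp hq => simp only [map_add, LinearMap.add_apply, hp, hq, add_comp]
  | monomial n z ih =>
    rw [pow_succ', mul_left_comm, map_mul, Module.End.mul_apply, aeval_X, lambdaBracket_D_right,
      ih, mul_comp X, X_comp, map_mul, Module.End.mul_apply, map_add, aeval_X, aeval_C,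
      LinearMap.add_apply, Module.algebraMap_end_apply]

theorem exists_prd_prd_right_eq_zero (a b c : L) :
    ∃ N, (∀ q, N ≤ q → C.prd q b c = 0) ∧ ∀ p q, N ≤ p → C.prd p a (C.prd q b c) = 0 := by
  choose B hB using fun q => C.bound a (C.prd q b c)
  obtain ⟨N, hN⟩ := C.bound b c
  refine ⟨N + (Finset.range N).sup B, fun q hq => hN q (by omega), fun p q hp => ?_⟩
  rcases lt_or_ge q N with hq | hq
  · exact hB q p (by have := Finset.le_sup (f := B) (Finset.mem_range.2 hq); omega)
  · rw [hN q hq, map_zero]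

theorem exists_prd_prd_left_eq_zero (a b c : L) :
    ∃ N, (∀ j, N ≤ j → C.prd j a b = 0) ∧ ∀ j n, N ≤ j + n → C.prd n (C.prd j a b) c = 0 := by
  choose B hB using fun j => C.bound (C.prd j a b) c
  obtain ⟨N, hN⟩ := C.bound a b
  refine ⟨N + (Finset.range N).sup B, fun j hj => hN j (by omega), fun j n hjn => ?_⟩
  rcases lt_or_ge j N with hj | hj
  · exact hB j n (by have := Finset.le_sup (f := B) (Finset.mem_range.2 hj); omega)
  · rw [hN j hj, map_zero, LinearMap.zero_apply]

theorem lambdaBracket_lambdaBracket_right (l m : ℂ) {a b c : L} {N : ℕ}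
    (hbc : ∀ q, N ≤ q → C.prd q b c = 0)
    (habc : ∀ p q, N ≤ p → C.prd p a (C.prd q b c) = 0) :
    C.lambdaBracket l a (C.lambdaBracket m b c)
      = ∑ q ∈ Finset.range N, ∑ p ∈ Finset.range N,
          (dividedPow ℂ m q * dividedPow ℂ l p) • C.prd p a (C.prd q b c) := by
  rw [lambdaBracket_eq_sum m hbc, map_sum]
  simp only [map_smul, lambdaBracket_eq_sum l fun p => habc p _, Finset.smul_sum, smul_smul]

theorem sum_antidiagonal_prd_prd (l : ℂ) (p q : ℕ) (a b c : L) :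
    ∑ i ∈ antidiagonal p,
        (dividedPow ℂ l i.1 * dividedPow ℂ l i.2) • C.prd (i.2 + q) (C.prd i.1 a b) c
      = dividedPow ℂ l p • (C.prd p a (C.prd q b c) - C.prd q b (C.prd p a c)) := by
  rw [C.jacobi, Finset.smul_sum, ← Finset.Nat.sum_antidiagonal_eq_sum_range_succ
    (fun j _ => dividedPow ℂ l p • (p.choose j : ℂ) • C.prd (p + q - j) (C.prd j a b) c)]
  refine Finset.sum_congr rfl fun i hi => ?_
  obtain rfl := mem_antidiagonal.1 hi
  rw [← choose_smul_dividedPow, smul_smul, smul_eq_mul, mul_comm,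
    show i.1 + i.2 + q - i.1 = i.2 + q by omega]

theorem lambdaBracket_add_lambdaBracket_left (l m : ℂ) {a b c : L} {N : ℕ}
    (hab : ∀ j, N ≤ j → C.prd j a b = 0)
    (habc : ∀ j n, N ≤ j + n → C.prd n (C.prd j a b) c = 0) :
    C.lambdaBracket (l + m) (C.lambdaBracket l a b) c
      = ∑ j ∈ Finset.range N, ∑ k ∈ Finset.range N, ∑ q ∈ Finset.range N,
          (dividedPow ℂ l j * (dividedPow ℂ l k * dividedPow ℂ m q))
            • C.prd (k + q) (C.prd j a b) c := by
  rw [lambdaBracket_eq_sum l hab, map_sum, LinearMap.sum_apply]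
  refine Finset.sum_congr rfl fun j _ => ?_
  rw [map_smul, LinearMap.smul_apply, lambdaBracket_eq_sum (N := N) (l + m)
      fun n hn => habc j n (by omega), Finset.smul_sum,
    ← sum_range_sum_antidiagonal fun k q hkq => by rw [habc j (k + q) (by omega), smul_zero]]
  refine Finset.sum_congr rfl fun n _ => ?_
  rw [smul_smul, dividedPow_add, Finset.mul_sum, Finset.sum_smul]
  refine Finset.sum_congr rfl fun i hi => ?_
  rw [mem_antidiagonal.1 hi]

theorem lambdaBracket_jacobi (l m : ℂ) (a b c : L) :
    C.lambdaBracket l a (C.lambdaBracket m b c) - C.lambdaBracket m b (C.lambdaBracket l a c)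
      = C.lambdaBracket (l + m) (C.lambdaBracket l a b) c := by
  obtain ⟨N₁, hbc, habc⟩ := C.exists_prd_prd_right_eq_zero a b c
  obtain ⟨N₂, hac, hbac⟩ := C.exists_prd_prd_right_eq_zero b a c
  obtain ⟨N₃, hab, habc'⟩ := C.exists_prd_prd_left_eq_zero a b c
  obtain ⟨N, hN₁, hN₂, hN₃⟩ : ∃ N, N₁ ≤ N ∧ N₂ ≤ N ∧ N₃ ≤ N :=
    ⟨N₁ + N₂ + N₃, by omega, by omega, by omega⟩
  rw [lambdaBracket_lambdaBracket_right (N := N) l m (fun q hq => hbc q (by omega))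
      fun p q hp => habc p q (by omega),
    lambdaBracket_lambdaBracket_right (N := N) m l (fun q hq => hac q (by omega))
      fun p q hp => hbac p q (by omega),
    lambdaBracket_add_lambdaBracket_left (N := N) l m (fun j hj => hab j (by omega))
      fun j n hn => habc' j n (by omega),
    Finset.sum_comm (f := fun q p => (dividedPow ℂ l q * dividedPow ℂ m p) • _),
    ← Finset.sum_sub_distrib, Finset.sum_congr rfl fun j _ => Finset.sum_comm, Finset.sum_comm]
  refine Finset.sum_congr rfl fun q _ => ?_
  rw [← Finset.sum_sub_distrib, ← sum_range_sum_antidiagonal fun j k hjk => by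
    rw [habc' j (k + q) (by omega), smul_zero]]
  refine Finset.sum_congr rfl fun p _ => ?_
  rw [mul_comm, ← smul_sub, mul_comm, mul_smul, ← sum_antidiagonal_prd_prd, Finset.smul_sum]
  refine Finset.sum_congr rfl fun i _ => ?_
  rw [smul_smul, mul_comm, mul_assoc]

theorem prd_eq_sum_of_forall_ge (n : ℕ) {a b : L} {N : ℕ} (hN : ∀ n, N ≤ n → C.prd n b a = 0) :
    C.prd n a b = -∑ j ∈ Finset.range N,
      ((-1 : ℂ) ^ (n + j) * (j.factorial : ℂ)⁻¹) • (⇑C.D)^[j] (C.prd (n + j) b a) := by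
  rw [C.skew]
  congr 1
  refine finsum_eq_sum_of_support_subset _ fun j hj => ?_
  by_contra hjN
  rw [Finset.coe_range, Set.mem_Iio, not_lt] at hjN
  exact hj (by beta_reduce; rw [hN _ (by omega), iterate_map_zero, smul_zero])

theorem lambdaBracket_skew (l : ℂ) {a b : L} {N : ℕ} (hN : ∀ n, N ≤ n → C.prd n b a = 0) :
    C.lambdaBracket l a b = -∑ n ∈ Finset.range N,
      aeval C.D (dividedPow ℂ (-Polynomial.C l - X) n) (C.prd n b a) := by
  have hN' (n : ℕ) (hn : N ≤ n) : C.prd n a b = 0 := by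
    rw [prd_eq_sum_of_forall_ge n hN, neg_eq_zero]
    refine Finset.sum_eq_zero fun j _ => ?_
    rw [hN _ (by omega), iterate_map_zero, smul_zero]
  have hterm (n j : ℕ) :
      dividedPow ℂ l n • ((-1 : ℂ) ^ (n + j) * (j.factorial : ℂ)⁻¹) • (⇑C.D)^[j] (C.prd (n + j) b a)
        = aeval C.D (dividedPow ℂ (-Polynomial.C l) n * dividedPow ℂ (-X) j)
          (C.prd (n + j) b a) := by
    have hpoly : dividedPow ℂ (-Polynomial.C l) n * dividedPow ℂ (-X) j
        = (dividedPow ℂ l n * ((-1) ^ (n + j) * (j.factorial : ℂ)⁻¹)) • X ^ j := by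
      simp only [dividedPow, neg_pow (Polynomial.C l), neg_pow (X : ℂ[X]), smul_eq_C_mul, C_mul,
        C_pow, C_neg, C_1, smul_eq_mul]
      ring
    rw [hpoly, map_smul, aeval_X_pow, LinearMap.smul_apply, Module.End.pow_apply, smul_smul]
  rw [lambdaBracket_eq_sum l hN']
  simp only [prd_eq_sum_of_forall_ge _ hN, smul_neg, Finset.sum_neg_distrib, Finset.smul_sum, hterm]
  rw [← sum_range_sum_antidiagonal fun n j hnj => by rw [hN _ hnj, map_zero]]
  congr 1
  refine Finset.sum_congr rfl fun n _ => ?_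
  rw [sub_eq_add_neg, dividedPow_add, map_sum, LinearMap.sum_apply]
  refine Finset.sum_congr rfl fun i hi => ?_
  rw [mem_antidiagonal.1 hi]

theorem BracketEq.lambdaBracket_eq {a b t : L} {p : ℂ[X][X]} (h : C.BracketEq a b t p) (l : ℂ) :
    C.lambdaBracket l a b = aeval C.D (p.eval (Polynomial.C l)) t := by
  have hN (n : ℕ) (hn : p.natDegree + 1 ≤ n) : C.prd n a b = 0 := by
    rw [h, coeff_eq_zero_of_natDegree_lt hn, applyP_eq_aeval, map_zero, LinearMap.zero_apply,
      smul_zero]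
  rw [lambdaBracket_eq_sum l hN, eval_eq_sum_range, map_sum, LinearMap.sum_apply]
  refine Finset.sum_congr rfl fun n _ => ?_
  rw [h, applyP_eq_aeval, smul_comm, ← smul_assoc, factorial_smul_dividedPow, mul_comm,
    ← Polynomial.C_pow, map_mul, aeval_C, Module.End.mul_apply, Module.algebraMap_end_apply]

theorem BracketEq.lambdaBracket_swap_eq {a b t : L} {p : ℂ[X][X]} (h : C.BracketEq b a t p)
    (l : ℂ) : C.lambdaBracket l a b = -aeval C.D (p.eval (-Polynomial.C l - X)) t := by
  have hN (n : ℕ) (hn : p.natDegree + 1 ≤ n) : C.prd n b a = 0 := by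
    rw [h, coeff_eq_zero_of_natDegree_lt hn, applyP_eq_aeval, map_zero, LinearMap.zero_apply,
      smul_zero]
  rw [lambdaBracket_skew l hN, eval_eq_sum_range, map_sum, LinearMap.sum_apply]
  congr 1
  refine Finset.sum_congr rfl fun n _ => ?_
  rw [h, applyP_eq_aeval, map_smul, ← LinearMap.smul_apply, ← map_smul, factorial_smul_dividedPow,
    mul_comm, map_mul, Module.End.mul_apply]

theorem BracketEq.units_smul {a b t : L} {p : ℂ[X][X]} (h : C.BracketEq a b t p) (x y z : ℂˣ) :
    C.BracketEq (x • a) (y • b) (z • t)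
      (Polynomial.C (Polynomial.C ((x * y / z : ℂˣ) : ℂ)) * p) := by
  intro n
  have hscalar : (x * y : ℂ) = ((x * y / z : ℂˣ) : ℂ) * z := by
    rw [← Units.val_mul, ← Units.val_mul, div_mul_cancel]
  calc
    C.prd n (x • a) (y • b) = (x * y : ℂ) • C.prd n a b := by
      simp only [Units.smul_def, map_smul, LinearMap.smul_apply, smul_smul, mul_comm]
    _ = _ := by
      rw [h, smul_comm, hscalar, mul_smul, Units.smul_def, applyP_eq_aeval, applyP_eq_aeval,
        coeff_C_mul, map_mul, aeval_C, Module.End.mul_apply, Module.algebraMap_end_apply, map_smul]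

end LieConformalAlgebra

namespace RankOneContext

variable {L : Type} [AddCommGroup L] [Module ℂ L] (C : RankOneContext L)

theorem bracketEq_bas (i j : ℤ) :
    C.BracketEq (C.bas i) (C.bas j) (C.bas (i + j)) (C.sp i j) :=
  C.sp_brkt i j

variable {C}

theorem aeval_bas_injective {d : ℤ} (hd : C.G d ≠ ⊥) :
    Function.Injective fun q : ℂ[X] => aeval C.D q (C.bas d) := by
  intro p q hpq
  have hsum : ∑ n ∈ (p - q).support, (p - q).coeff n • (⇑C.D)^[n] (C.bas d) = 0 := by
    rw [← sub_eq_zero.2 hpq, ← LinearMap.sub_apply, ← map_sub, ← C.applyP_eq_aeval]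
    rfl
  refine sub_eq_zero.1 (Polynomial.ext fun n => ?_)
  by_cases hn : n ∈ (p - q).support
  · exact linearIndependent_iff'.1 (C.bas_indep d hd) _ _ hsum n hn
  · exact notMem_support_iff.1 hn

theorem jacobi_sp {i j k : ℤ} (hd : C.G (i + j + k) ≠ ⊥) (x l m : ℂ) :
    (C.sp j k).evalEval (x + l) m * (C.sp i (j + k)).evalEval x l
        - (C.sp i k).evalEval (x + m) l * (C.sp j (i + k)).evalEval x m
      = (C.sp i j).evalEval (-l - m) l * (C.sp (i + j) k).evalEval x (l + m) := by
  have h := C.lambdaBracket_jacobi l m (C.bas i) (C.bas j) (C.bas k)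
  rw [(C.bracketEq_bas j k).lambdaBracket_eq, (C.bracketEq_bas i k).lambdaBracket_eq,
    (C.bracketEq_bas i j).lambdaBracket_eq, LieConformalAlgebra.lambdaBracket_aeval_right,
    LieConformalAlgebra.lambdaBracket_aeval_right, LieConformalAlgebra.lambdaBracket_aeval_left,
    (C.bracketEq_bas i (j + k)).lambdaBracket_eq, (C.bracketEq_bas j (i + k)).lambdaBracket_eq,
    (C.bracketEq_bas (i + j) k).lambdaBracket_eq,
    add_left_comm j i k, ← add_assoc, ← Module.End.mul_apply, ← Module.End.mul_apply, ← map_mul,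
    ← map_mul, ← LinearMap.sub_apply, ← map_sub, ← LinearMap.smul_apply, ← map_smul] at h
  simpa [eval_eval_eq_evalEval, sub_eq_add_neg, add_comm, ← add_assoc]
    using congrArg (eval x) (aeval_bas_injective hd h)

theorem isConformalFamily_sp : IsConformalFamily C.sp where
  jacobi i j k x l m := by
    by_cases hd : C.G (i + j + k) = ⊥
    · have hjk : C.sp i (j + k) = 0 := C.sp_zero _ _ (.inr (.inr (by rwa [← add_assoc])))
      have hik : C.sp j (i + k) = 0 :=
        C.sp_zero _ _ (.inr (.inr (by rwa [add_left_comm, ← add_assoc])))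
      have hij : C.sp (i + j) k = 0 := C.sp_zero _ _ (.inr (.inr hd))
      simp only [hjk, hik, hij, evalEval_zero, mul_zero, sub_self]
    · exact jacobi_sp hd x l m
  skew i j x l := by
    by_cases hd : C.G (i + j) = ⊥
    · rw [C.sp_zero i j (.inr (.inr hd)), C.sp_zero j i (.inr (.inr (by rwa [add_comm]))),
        evalEval_zero, evalEval_zero, neg_zero]
    · have hji := add_comm j i ▸ C.bracketEq_bas j i
      have h := ((C.bracketEq_bas i j).lambdaBracket_eq l).symm.trans (hji.lambdaBracket_swap_eq l)
      rw [← LinearMap.neg_apply, ← map_neg] at h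
      simpa [eval_eval_eq_evalEval] using congrArg (eval x) (aeval_bas_injective hd h)

theorem isFreePolyBasis_units_smul_bas (hG : ∀ i, C.G i ≠ ⊥) (k : ℤ → ℂˣ) :
    C.IsFreePolyBasis fun i => k i • C.bas i := by
  let b (i : ℤ) : Module.Basis ℕ ℂ (C.G i) :=
    (Module.Basis.span (C.bas_indep i (hG i))).map (LinearEquiv.ofEq _ _ (C.bas_span i (hG i)).symm)
  let B : Module.Basis (ℤ × ℕ) ℂ L :=
    ((C.internal.collectedBasis b).reindex (Equiv.sigmaEquivProd ℤ ℕ)).unitsSMul fun q => k q.1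
  have hB : (fun q : ℤ × ℕ => (⇑C.D)^[q.2] (k q.1 • C.bas q.1)) = B := by
    funext q
    rw [Module.Basis.unitsSMul_apply, Module.Basis.reindex_apply,
      DirectSum.IsInternal.collectedBasis_coe, Units.smul_def, ← Module.End.pow_apply, map_smul,
      Module.End.pow_apply]
    simp [b, Units.smul_def]
  rw [LieConformalAlgebra.IsFreePolyBasis, hB]
  exact ⟨B.linearIndependent, B.span_eq⟩

theorem exists_isFreePolyBasis_of_rescaleBasis_eq {k : ℤ → ℂˣ} {t r s : ℂ}
    (h : rescaleBasis k C.sp = modelFamily t r s) :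
    ∃ v : ℤ → L, C.IsFreePolyBasis v ∧
      ∀ i j, C.BracketEq (v i) (v j) (v (i + j)) (modelFamily t r s i j) := by
  have hG (i : ℤ) : C.G i ≠ ⊥ := fun hi => modelFamily_one_ne_zero t r s (i - 1) <| by
    rw [← h, rescaleBasis, C.sp_zero 1 (i - 1) (.inr (.inr (by rwa [add_sub_cancel]))), mul_zero]
  refine ⟨_, isFreePolyBasis_units_smul_bas hG k, fun i j => ?_⟩
  rw [← h]
  exact (C.bracketEq_bas i j).units_smul (k i) (k j) (k (i + j))

end RankOneContext

theorem classV_deg_one_one_classification_general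
    {L : Type} [AddCommGroup L] [Module ℂ L] (C : RankOneContext L)
    (hmem₁ : (C.sp (-1) 1).natDegree = 0)
    (hmem₀ : ∀ n : ℕ, ((C.sp 0 1).coeff n).natDegree = 0)
    (hdeg₁ : ((C.sp (-1) 1).coeff 0).natDegree = 1)
    (hdeg₀ : (C.sp 0 1).natDegree = 1) :
    ∃ s : ℂ, C.toLieConformalAlgebra.IsCL2 0 s ∨ C.toLieConformalAlgebra.IsCL3 s := by
  obtain ⟨a, r, h₀⟩ := exists_eq_C_mul_X_sub_C_of_natDegree_eq_one hdeg₀ hmem₀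
  obtain ⟨b, t, h₁⟩ := exists_eq_C_mul_C_X_add_C_of_natDegree_eq_zero hmem₁ hdeg₁
  obtain ⟨k, s, hCL2 | hCL3⟩ := C.isConformalFamily_sp.exists_rescaleBasis_eq h₀ h₁
  · refine ⟨s, .inl ?_⟩
    rw [LieConformalAlgebra.IsCL2, pCL2_zero_eq_modelFamily]
    exact C.exists_isFreePolyBasis_of_rescaleBasis_eq hCL2
  · refine ⟨s, .inr ?_⟩
    rw [LieConformalAlgebra.IsCL3, pCL3_eq_modelFamily]
    exact C.exists_isFreePolyBasis_of_rescaleBasis_eq hCL3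

/-- a class `𝒱` algebra with `deg p_{-1,1}(∂) = 1` and
`deg p_{0,1}(λ) = 1` is isomorphic to `CL₂(0,s)` or `CL₃(s)`. -/
theorem classV_deg_one_one_classification
    {L : Type} [AddCommGroup L] [Module ℂ L] (C : ClassV L)
    (hmem₁ : (C.sp (-1) 1).natDegree = 0)
    (hmem₀ : ∀ n : ℕ, ((C.sp 0 1).coeff n).natDegree = 0)
    (hdeg₁ : ((C.sp (-1) 1).coeff 0).natDegree = 1)
    (hdeg₀ : (C.sp 0 1).natDegree = 1) :
    ∃ s : ℂ, C.toLieConformalAlgebra.IsCL2 0 s ∨ C.toLieConformalAlgebra.IsCL3 s :=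
  classV_deg_one_one_classification_general C.toRankOneContext hmem₁ hmem₀ hdeg₁ hdeg₀
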